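/- arXiv:1204.2436 — 2 statements merged into one kernel-verified Lean document; each statement's English description precedes it below -/
import Mathlib

section
/- Let U ∈ ℝ^{m×r} be entrywise nonnegative and let k ≠ l be column indices such that U_{:k} ≠ 0 and the support of U_{:k} is contained in the support of U_{:l}. Then there exists an invertible r×r matrix D such that D⁻¹ is entrywise nonnegative, UD is entrywise nonnegative, and for some row index p̄ one has U_{p̄ l} > 0 while (UD)_{p̄ l} = 0. Consequently, for any entrywise nonnegative V ∈ ℝ^{r×n}, the pair (UD, D⁻¹V) is an exact NMF of M = UV whose first factor has a sparsity pattern different from that of U. -/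
open Matrix BigOperators

/-- The column `j` of `M` normalized to unit ℓ₁-norm. -/
noncomputable def normCol {m n : ℕ} (M : Matrix (Fin m) (Fin n) ℝ) (j : Fin n) : Fin m → ℝ :=
  (∑ i, |M i j|)⁻¹ • fun i => M i j

/-- Column `j` of `M` is nonzero. -/
def colNZ {m n : ℕ} (M : Matrix (Fin m) (Fin n) ℝ) (j : Fin n) : Prop :=
  (fun i => M i j) ≠ 0

/-- `θ(M)`: the set of ℓ₁-normalized nonzero columns of `M`. -/
noncomputable def thetaCols {m n : ℕ} (M : Matrix (Fin m) (Fin n) ℝ) : Set (Fin m → ℝ) :=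
  {x | ∃ j, colNZ M j ∧ x = normCol M j}

/-- The nonnegative rank of `M`. -/
noncomputable def nnRank {m n : ℕ} (M : Matrix (Fin m) (Fin n) ℝ) : ℕ :=
  sInf {r : ℕ | ∃ U : Matrix (Fin m) (Fin r) ℝ, ∃ V : Matrix (Fin r) (Fin n) ℝ,
    (∀ i j, 0 ≤ U i j) ∧ (∀ i j, 0 ≤ V i j) ∧ M = U * V}

/-- The squared Frobenius norm. -/
noncomputable def frobSq {m n : ℕ} (A : Matrix (Fin m) (Fin n) ℝ) : ℝ :=
  ∑ i, ∑ j, (A i j) ^ 2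

/-- Feasibility for problem (tigrel): `B ≥ 0`, zero diagonal, `MB ≤ M` entrywise. -/
def TigrelFeasible {m n : ℕ} (M : Matrix (Fin m) (Fin n) ℝ)
    (B : Matrix (Fin n) (Fin n) ℝ) : Prop :=
  (∀ i j, 0 ≤ B i j) ∧ (∀ i, B i i = 0) ∧ ∀ i j, (M * B) i j ≤ M i j

/-- Optimality for problem (tigrel): feasible and minimizes `‖M - MB‖_F²`. -/
def TigrelOpt {m n : ℕ} (M : Matrix (Fin m) (Fin n) ℝ)
    (B : Matrix (Fin n) (Fin n) ℝ) : Prop :=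
  TigrelFeasible M B ∧
    ∀ B', TigrelFeasible M B' → frobSq (M - M * B) ≤ frobSq (M - M * B')

/-- A monomial matrix: permutation of a diagonal matrix with positive diagonal. -/
def IsMonomial {k : ℕ} (P : Matrix (Fin k) (Fin k) ℝ) : Prop :=
  ∃ (σ : Equiv.Perm (Fin k)) (d : Fin k → ℝ), (∀ i, 0 < d i) ∧
    ∀ i j, P i j = if i = σ j then d j else 0

/-- Every extreme point of `conv(θ(M))` equals `θ(M_{:j})` for exactly one column `j`. -/
def NonRepeatedVertices {m n : ℕ} (M : Matrix (Fin m) (Fin n) ℝ) : Prop :=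
  ∀ x ∈ Set.extremePoints ℝ (convexHull ℝ (thetaCols M)),
    ∃! j : Fin n, colNZ M j ∧ x = normCol M j

/-- Uniqueness of size-`r` exact NMF up to permutation and scaling. -/
def UniqueNMF {m n : ℕ} (r : ℕ) (M : Matrix (Fin m) (Fin n) ℝ) : Prop :=
  ∀ (U₁ U₂ : Matrix (Fin m) (Fin r) ℝ) (V₁ V₂ : Matrix (Fin r) (Fin n) ℝ),
    (∀ i j, 0 ≤ U₁ i j) → (∀ i j, 0 ≤ V₁ i j) →
    (∀ i j, 0 ≤ U₂ i j) → (∀ i j, 0 ≤ V₂ i j) →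
    M = U₁ * V₁ → M = U₂ * V₂ →
    ∃ P : Matrix (Fin r) (Fin r) ℝ, IsMonomial P ∧ U₂ = U₁ * P ∧ V₂ = P⁻¹ * V₁

/-- Separability of a factorization, expressed as a property of the right factor `V`. -/
def SeparableFactor {r n : ℕ} (V : Matrix (Fin r) (Fin n) ℝ) : Prop :=
  ∀ i : Fin r, ∃ j : Fin n, V i j ≠ 0 ∧ ∀ i' : Fin r, i' ≠ i → V i' j = 0

/-- The Frobenius norm. -/
noncomputable def frobNorm {m n : ℕ} (A : Matrix (Fin m) (Fin n) ℝ) : ℝ :=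
  Real.sqrt (∑ i, ∑ j, (A i j) ^ 2)

/-- The Euclidean (ℓ₂) norm of a vector. -/
noncomputable def vecNorm2 {n : ℕ} (x : Fin n → ℝ) : ℝ :=
  Real.sqrt (∑ i, (x i) ^ 2)

/-- The spectral (operator 2-) norm of a matrix. -/
noncomputable def specNorm {m n : ℕ} (A : Matrix (Fin m) (Fin n) ℝ) : ℝ :=
  sSup {c : ℝ | ∃ x : Fin n → ℝ, vecNorm2 x ≤ 1 ∧ c = vecNorm2 (A.mulVec x)}

/-!
Subtract from column `l` of `U` the largest multiple `c` of column `k` that keeps it nonnegative;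
`c` is the least ratio `U i l / U i k` over the support of column `k`, and an entry of column `l`
where the ratio is least becomes zero. This column operation is right multiplication by the
transvection `D = 1 - c E_{kl}`, whose inverse `1 + c E_{kl}` is nonnegative.
-/

section MinimalRatio

variable {ι 𝕜 : Type*} [Semifield 𝕜] [LinearOrder 𝕜] [IsStrictOrderedRing 𝕜]

theorem exists_smul_le_and_mul_eq {u v : ι → 𝕜} (hu : 0 ≤ u) (hv : 0 ≤ v)
    (hfin : (Function.support u).Finite) (hne : u ≠ 0) :
    ∃ c, 0 ≤ c ∧ c • u ≤ v ∧ ∃ p, u p ≠ 0 ∧ c * u p = v p := by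
  obtain ⟨p, hp, hmin⟩ := Set.exists_min_image (Function.support u) (fun i => v i / u i) hfin
    (Function.support_nonempty_iff.mpr hne)
  refine ⟨v p / u p, div_nonneg (hv p) (hu p), fun i => ?_, p, hp, div_mul_cancel₀ _ hp⟩
  rw [Pi.smul_apply, smul_eq_mul]
  rcases (hu i).eq_or_lt with hi | hi
  · rw [← hi, Pi.zero_apply, mul_zero]
    exact hv i
  · exact (le_div_iff₀ hi).mp (hmin i hi.ne')

end MinimalRatio

section OrderedMatrix

variable {ι κ ν R : Type*}

theorem matrix_mul_apply_nonneg [Fintype κ] [Semiring R] [PartialOrder R] [IsOrderedRing R]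
    {A : Matrix ι κ R} {B : Matrix κ ν R} (hA : ∀ i j, 0 ≤ A i j) (hB : ∀ i j, 0 ≤ B i j)
    (i : ι) (j : ν) : 0 ≤ (A * B) i j :=
  dotProduct_nonneg_of_nonneg (hA i) fun x => hB x j

variable [DecidableEq κ] [CommRing R]

theorem transvection_inv [Fintype κ] {k l : κ} (hkl : k ≠ l) (c : R) :
    (transvection k l c)⁻¹ = transvection k l (-c) :=
  inv_eq_right_inv <| by
    rw [transvection_mul_transvection_same k l hkl, add_neg_cancel, transvection_zero]

variable [PartialOrder R]

theorem transvection_apply_nonneg [IsOrderedRing R] {c : R} (hc : 0 ≤ c) (k l i j : κ) :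
    0 ≤ transvection k l c i j := by
  rw [transvection, Matrix.add_apply, one_apply, single_apply]
  exact add_nonneg (ite_nonneg zero_le_one le_rfl) (ite_nonneg hc le_rfl)

theorem mul_transvection_neg_apply_nonneg [Fintype κ] [IsOrderedAddMonoid R]
    {U : Matrix ι κ R} (hU : ∀ i j, 0 ≤ U i j) {k l : κ} {c : R} (hc : c • U.col k ≤ U.col l)
    (i : ι) (j : κ) : 0 ≤ (U * transvection k l (-c)) i j := by
  rcases eq_or_ne j l with rfl | hj
  · rw [mul_transvection_apply_same, neg_mul, ← sub_eq_add_neg]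
    exact sub_nonneg.mpr (hc i)
  · rw [mul_transvection_apply_of_ne k l i j hj]
    exact hU i j

end OrderedMatrix

theorem stmt5_general {ι κ 𝕜 : Type*} [Fintype κ] [DecidableEq κ]
    [Field 𝕜] [LinearOrder 𝕜] [IsStrictOrderedRing 𝕜]
    (U : Matrix ι κ 𝕜) (hU : ∀ i j, 0 ≤ U i j) (k l : κ) (hkl : k ≠ l)
    (hfin : (Function.support (U.col k)).Finite) (hknz : U.col k ≠ 0)
    (hsupp : Function.support (U.col k) ⊆ Function.support (U.col l)) :
    ∃ D : Matrix κ κ 𝕜, IsUnit D.det ∧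
      (∀ i j, 0 ≤ D⁻¹ i j) ∧
      (∀ i j, 0 ≤ (U * D) i j) ∧
      (∃ p : ι, 0 < U p l ∧ (U * D) p l = 0) ∧
      ∀ (ν : Type*) (V : Matrix κ ν 𝕜), (∀ i j, 0 ≤ V i j) →
        (∀ i j, 0 ≤ (D⁻¹ * V) i j) ∧ (U * D) * (D⁻¹ * V) = U * V := by
  obtain ⟨c, hc, hle, p, hpk, hp⟩ :=
    exists_smul_le_and_mul_eq (fun i => hU i k) (fun i => hU i l) hfin hknz
  have hdet : IsUnit (transvection k l (-c)).det := by
    rw [det_transvection_of_ne k l hkl]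
    exact isUnit_one
  have hinv : ∀ i j, 0 ≤ (transvection k l (-c))⁻¹ i j := by
    rw [transvection_inv hkl, neg_neg]
    exact transvection_apply_nonneg hc k l
  have hzero : (U * transvection k l (-c)) p l = 0 := by
    rw [mul_transvection_apply_same, neg_mul, ← sub_eq_add_neg]
    exact sub_eq_zero.mpr hp.symm
  refine ⟨transvection k l (-c), hdet, hinv, mul_transvection_neg_apply_nonneg hU hle,
    ⟨p, (hU p l).lt_of_ne' (hsupp hpk), hzero⟩,
    fun ν V hV => ⟨matrix_mul_apply_nonneg hinv hV, ?_⟩⟩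
  rw [Matrix.mul_assoc, mul_nonsing_inv_cancel_left _ V hdet]

/-- if the support of a nonzero column `U_{:k}` is contained in the support
of `U_{:l}` (`k ≠ l`), there is an invertible `D` with `D⁻¹ ≥ 0`, `UD ≥ 0`, killing some
positive entry of `U_{:l}`; consequently `(UD, D⁻¹V)` is an exact NMF of `UV` for every
nonnegative `V`, with a different sparsity pattern for the first factor. -/
theorem stmt5 {m r : ℕ} (U : Matrix (Fin m) (Fin r) ℝ) (hU : ∀ i j, 0 ≤ U i j)
    (k l : Fin r) (hkl : k ≠ l) (hknz : (fun i => U i k) ≠ 0)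
    (hsupp : ∀ i, U i k ≠ 0 → U i l ≠ 0) :
    ∃ D : Matrix (Fin r) (Fin r) ℝ, IsUnit D.det ∧
      (∀ i j, 0 ≤ D⁻¹ i j) ∧
      (∀ i j, 0 ≤ (U * D) i j) ∧
      (∃ p : Fin m, 0 < U p l ∧ (U * D) p l = 0) ∧
      ∀ (n : ℕ) (V : Matrix (Fin r) (Fin n) ℝ), (∀ i j, 0 ≤ V i j) →
        (∀ i j, 0 ≤ (D⁻¹ * V) i j) ∧ (U * D) * (D⁻¹ * V) = U * V := by
  obtain ⟨D, hdet, hinv, hUD, hp, hV⟩ :=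
    stmt5_general U hU k l hkl (Set.toFinite _) hknz hsupp
  exact ⟨D, hdet, hinv, hUD, hp, fun n => hV (Fin n)⟩
end

section
/- Let M ∈ ℝ^{m×n} be entrywise nonnegative such that the vertices of conv(θ(M)) are non-repeated. Then conv(θ(M)) ⊆ conv(θ(P(M))) ⊆ Δ^m ∩ col(θ(M)), where col(θ(M)) denotes the linear span of the columns of θ(M). -/
open Matrix BigOperators

/-!
Every column satisfies `M_{:j} = P_{:j} + ∑ k, B_{kj} M_{:k}` with `P = M(I - B)`, `B ≥ 0` and
`B_{jj} = 0`. Normalizing, a vertex `v = θ(M_{:j})` of `conv(θ(M))` is a convex combination of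
columns of `θ(P)` and of columns of `θ(M)` different from `v`, by non-repetition. Hence no extreme
point of `Q = conv(θ(M) ∪ θ(P))` can lie outside `θ(P)`, and Krein–Milman applied to `Q` gives
`Q = conv(θ(P))`.
-/

section Convex

theorem mem_convexHull_of_mem_pointedConeHull {𝕜 E : Type*} [Field 𝕜] [LinearOrder 𝕜]
    [IsStrictOrderedRing 𝕜] [AddCommGroup E] [Module 𝕜 E] (φ : E →ₗ[𝕜] 𝕜) {s : Set E}
    (hs : ∀ y ∈ s, φ y = 1) {x : E} (hx : x ∈ PointedCone.hull 𝕜 s) (hφx : φ x = 1) :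
    x ∈ convexHull 𝕜 s := by
  obtain ⟨c, hcs, hc, rfl⟩ := PointedCone.mem_hull_set.1 hx
  have sum_coeff : ∑ y ∈ c.support, c y = 1 := by
    rw [← hφx, Finsupp.sum, map_sum]
    refine Finset.sum_congr rfl fun y hy => ?_
    rw [map_smul, hs y (hcs hy), smul_eq_mul, mul_one]
  exact (convex_convexHull 𝕜 s).sum_mem (fun y _ => hc y) sum_coeff
    fun y hy => subset_convexHull 𝕜 s (hcs hy)

theorem convexHull_subset_closure_convexHull_of_extremePoints {E : Type*} [AddCommGroup E]
    [Module ℝ E] [TopologicalSpace E] [T2Space E] [IsTopologicalAddGroup E] [ContinuousSMul ℝ E]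
    [LocallyConvexSpace ℝ E] {s t : Set E} (hst : IsCompact (convexHull ℝ (s ∪ t)))
    (h : ∀ v ∈ (convexHull ℝ s).extremePoints ℝ, v ∈ convexHull ℝ (t ∪ s \ {v})) :
    convexHull ℝ s ⊆ closure (convexHull ℝ t) := by
  have extremePoints_subset_right : (convexHull ℝ (s ∪ t)).extremePoints ℝ ⊆ t := by
    intro v hv
    by_contra hvt
    have hvs : v ∈ s := (extremePoints_convexHull_subset hv).resolve_right hvt
    have hv_left : v ∈ (convexHull ℝ s).extremePoints ℝ :=
      inter_extremePoints_subset_extremePoints_of_subset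
        (convexHull_mono Set.subset_union_left) ⟨subset_convexHull ℝ s hvs, hv⟩
    have hv_punctured : v ∈ (convexHull ℝ (t ∪ s \ {v})).extremePoints ℝ :=
      inter_extremePoints_subset_extremePoints_of_subset
        (convexHull_mono (Set.union_subset Set.subset_union_right
          (Set.sdiff_subset.trans Set.subset_union_left))) ⟨h v hv_left, hv⟩
    rcases extremePoints_convexHull_subset hv_punctured with hv_mem | hv_mem
    · exact hvt hv_mem
    · exact hv_mem.2 rfl
  calc convexHull ℝ s ⊆ convexHull ℝ (s ∪ t) := convexHull_mono Set.subset_union_left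
    _ = closure (convexHull ℝ ((convexHull ℝ (s ∪ t)).extremePoints ℝ)) :=
      (closure_convexHull_extremePoints hst (convex_convexHull ℝ _)).symm
    _ ⊆ closure (convexHull ℝ t) := closure_mono (convexHull_mono extremePoints_subset_right)

end Convex

theorem col_mul_eq_sum_smul_col {m n p R : Type*} [Fintype n] [CommSemiring R] (A : Matrix m n R)
    (C : Matrix n p R) (j : p) : (A * C).col j = ∑ k, C k j • A.col k := by
  ext i
  simp only [col_apply, mul_apply, Finset.sum_apply, Pi.smul_apply, smul_eq_mul, mul_comm]

section NormalizedColumns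

variable {m n p : ℕ} {M : Matrix (Fin m) (Fin n) ℝ}

theorem thetaCols_finite (M : Matrix (Fin m) (Fin n) ℝ) : (thetaCols M).Finite :=
  (Set.finite_range (normCol M)).subset fun _ ⟨j, _, hj⟩ => ⟨j, hj.symm⟩

theorem sum_abs_ne_zero_of_colNZ {j : Fin n} (hj : colNZ M j) : ∑ i, |M i j| ≠ 0 := by
  intro hsum
  refine hj (funext fun i => abs_eq_zero.1 ?_)
  exact (Finset.sum_eq_zero_iff_of_nonneg fun i _ => abs_nonneg (M i j)).1 hsum i
    (Finset.mem_univ i)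

theorem sum_abs_smul_normCol {j : Fin n} (hj : colNZ M j) :
    (∑ i, |M i j|) • normCol M j = M.col j :=
  smul_inv_smul₀ (sum_abs_ne_zero_of_colNZ hj) _

theorem col_mem_pointedConeHull {s : Set (Fin m → ℝ)} {j : Fin n}
    (hs : colNZ M j → normCol M j ∈ s) : M.col j ∈ PointedCone.hull ℝ s := by
  by_cases hj : colNZ M j
  · rw [← sum_abs_smul_normCol hj]
    exact PointedCone.smul_mem _ (Finset.sum_nonneg fun i _ => abs_nonneg (M i j))
      (PointedCone.subset_hull (hs hj))
  · have col_eq_zero : M.col j = 0 := not_not.1 hj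
    rw [col_eq_zero]
    exact zero_mem _

theorem thetaCols_mul_subset_span (M : Matrix (Fin m) (Fin n) ℝ) (C : Matrix (Fin n) (Fin p) ℝ) :
    thetaCols (M * C) ⊆ Submodule.span ℝ (thetaCols M) := by
  have col_mem_span (k : Fin n) : M.col k ∈ Submodule.span ℝ (thetaCols M) :=
    PointedCone.hull_le_span _ _ (col_mem_pointedConeHull fun hk => ⟨k, hk, rfl⟩)
  rintro _ ⟨j, -, rfl⟩
  refine Submodule.smul_mem _ _ ?_
  change (M * C).col j ∈ _
  rw [col_mul_eq_sum_smul_col]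
  exact Submodule.sum_smul_mem _ _ fun k _ => col_mem_span k

theorem thetaCols_subset_stdSimplex (hM : ∀ i j, 0 ≤ M i j) :
    thetaCols M ⊆ stdSimplex ℝ (Fin m) := by
  rintro _ ⟨j, hj, rfl⟩
  have abs_eq (i : Fin m) : |M i j| = M i j := abs_of_nonneg (hM i j)
  have sum_ne_zero := sum_abs_ne_zero_of_colNZ hj
  simp only [abs_eq] at sum_ne_zero
  refine ⟨fun i => ?_, ?_⟩
  · exact mul_nonneg (inv_nonneg.2 (Finset.sum_nonneg fun i _ => abs_nonneg (M i j))) (hM i j)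
  · simp only [normCol, abs_eq, Pi.smul_apply, smul_eq_mul, ← Finset.mul_sum]
    exact inv_mul_cancel₀ sum_ne_zero

end NormalizedColumns

section Preprocessing

variable {m n : ℕ} {M : Matrix (Fin m) (Fin n) ℝ} {B : Matrix (Fin n) (Fin n) ℝ}

theorem TigrelFeasible.mul_one_sub_nonneg (hB : TigrelFeasible M B) (i : Fin m) (j : Fin n) :
    0 ≤ (M * (1 - B) : Matrix (Fin m) (Fin n) ℝ) i j := by
  rw [Matrix.mul_sub, Matrix.mul_one, Matrix.sub_apply]
  exact sub_nonneg.2 (hB.2.2 i j)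

theorem col_eq_col_mul_one_sub_add_sum (M : Matrix (Fin m) (Fin n) ℝ)
    (B : Matrix (Fin n) (Fin n) ℝ) (j : Fin n) :
    M.col j = (M * (1 - B)).col j + ∑ k, B k j • M.col k := by
  rw [← col_mul_eq_sum_smul_col]
  ext i
  simp only [Matrix.mul_sub, Matrix.mul_one, col_apply, Pi.add_apply, Matrix.sub_apply,
    sub_add_cancel]

theorem TigrelFeasible.normCol_mem_convexHull (hB : TigrelFeasible M B) (hM : ∀ i j, 0 ≤ M i j)
    {j : Fin n} (hj : colNZ M j) (hunique : ∀ k, colNZ M k → normCol M j = normCol M k → k = j) :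
    normCol M j ∈ convexHull ℝ (thetaCols (M * (1 - B)) ∪ thetaCols M \ {normCol M j}) := by
  set s := thetaCols (M * (1 - B)) ∪ thetaCols M \ {normCol M j}
  have hs : s ⊆ stdSimplex ℝ (Fin m) :=
    Set.union_subset (thetaCols_subset_stdSimplex hB.mul_one_sub_nonneg)
      (Set.sdiff_subset.trans (thetaCols_subset_stdSimplex hM))
  have residual_mem : (M * (1 - B)).col j ∈ PointedCone.hull ℝ s :=
    col_mem_pointedConeHull fun hPj => .inl ⟨j, hPj, rfl⟩
  have term_mem (k : Fin n) : B k j • M.col k ∈ PointedCone.hull ℝ s := by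
    rcases eq_or_ne k j with rfl | hkj
    · rw [hB.2.1, zero_smul]
      exact zero_mem _
    · refine PointedCone.smul_mem _ (hB.1 k j) (col_mem_pointedConeHull fun hk => ?_)
      exact .inr ⟨⟨k, hk, rfl⟩, fun heq => hkj (hunique k hk heq.symm)⟩
  have col_mem : M.col j ∈ PointedCone.hull ℝ s := by
    rw [col_eq_col_mul_one_sub_add_sum M B]
    exact add_mem residual_mem (sum_mem fun k _ => term_mem k)
  have normCol_mem : normCol M j ∈ PointedCone.hull ℝ s :=
    PointedCone.smul_mem _ (inv_nonneg.2 (Finset.sum_nonneg fun i _ => abs_nonneg (M i j))) col_mem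
  let coordSum : (Fin m → ℝ) →ₗ[ℝ] ℝ := ∑ i, LinearMap.proj i
  have coordSum_eq_one {x : Fin m → ℝ} (hx : x ∈ stdSimplex ℝ (Fin m)) : coordSum x = 1 := by
    simpa only [coordSum, LinearMap.sum_apply, LinearMap.proj_apply] using hx.2
  exact mem_convexHull_of_mem_pointedConeHull coordSum (fun y hy => coordSum_eq_one (hs hy))
    normCol_mem (coordSum_eq_one (thetaCols_subset_stdSimplex hM ⟨j, hj, rfl⟩))

end Preprocessing

theorem stmt9_general {m n : ℕ} (M : Matrix (Fin m) (Fin n) ℝ) (hM : ∀ i j, 0 ≤ M i j)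
    (hvert : NonRepeatedVertices M)
    (B : Matrix (Fin n) (Fin n) ℝ) (hB : TigrelFeasible M B) :
    convexHull ℝ (thetaCols M) ⊆ convexHull ℝ (thetaCols (M * (1 - B))) ∧
    convexHull ℝ (thetaCols (M * (1 - B))) ⊆
      stdSimplex ℝ (Fin m) ∩ (Submodule.span ℝ (thetaCols M) : Set (Fin m → ℝ)) := by
  have hfin := thetaCols_finite (M * (1 - B))
  refine ⟨?_, Set.subset_inter ?_ ?_⟩
  · rw [← (hfin.isClosed_convexHull ℝ).closure_eq]
    refine convexHull_subset_closure_convexHull_of_extremePoints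
      (((thetaCols_finite M).union hfin).isCompact_convexHull ℝ) fun v hv => ?_
    obtain ⟨j, ⟨hj, rfl⟩, hunique⟩ := hvert v hv
    exact hB.normCol_mem_convexHull hM hj fun k hk heq => hunique k ⟨hk, heq⟩
  · exact convexHull_min (thetaCols_subset_stdSimplex hB.mul_one_sub_nonneg)
      (convex_stdSimplex ℝ (Fin m))
  · exact convexHull_min (thetaCols_mul_subset_span M (1 - B)) (Submodule.convex _)

/-- if the vertices of `conv(θ(M))` are non-repeated, then
`conv(θ(M)) ⊆ conv(θ(P(M))) ⊆ Δ^m ∩ col(θ(M))`. -/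
theorem stmt9 {m n : ℕ} (M : Matrix (Fin m) (Fin n) ℝ) (hM : ∀ i j, 0 ≤ M i j)
    (hvert : NonRepeatedVertices M)
    (B : Matrix (Fin n) (Fin n) ℝ) (hB : TigrelOpt M B) :
    convexHull ℝ (thetaCols M) ⊆ convexHull ℝ (thetaCols (M * (1 - B))) ∧
    convexHull ℝ (thetaCols (M * (1 - B))) ⊆
      stdSimplex ℝ (Fin m) ∩ (Submodule.span ℝ (thetaCols M) : Set (Fin m → ℝ)) :=
  stmt9_general M hM hvert B hB.1
end
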